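/- arXiv:math/0608461 — 2 statements merged into one kernel-verified Lean document; each statement's English description precedes it below -/
import Mathlib

section
/- Let W be a real Banach space, let I denote the identity operator on W, and let C : W → W be a continuous linear operator such that C² = C∘C is a compact operator. Then the range of I + C is a closed subspace of W. -/
/-!
Put `T = I + C` and `S = I - C`, so that `x = S (T x) + C² x`. For `x` in a bounded set the second
summand stays in a compact set, and therefore `T` maps closed bounded sets to closed sets. Applied
to vectors of the unit ball at distance at least some `r > 0` from the kernel, this bounds `‖T x‖`
from below there, so by rescaling every point `y` of the range has a preimage of norm at most
`c * ‖y‖`, for a fixed `c`. Thus, near a given point, the range of `T` is contained in the image of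
a closed ball, which is closed.
-/

open Bornology Metric

theorem isClosed_image_of_forall_exists_eq_add {X Y : Type*} [TopologicalSpace X] [Add X]
    [ContinuousAdd X] [TopologicalSpace Y] [T2Space Y] {T : X → Y} {S : Y → X}
    (hT : Continuous T) (hS : Continuous S) {B K : Set X} (hB : IsClosed B) (hK : IsCompact K)
    (hBK : ∀ x ∈ B, ∃ k ∈ K, x = S (T x) + k) : IsClosed (T '' B) := by
  have : CompactSpace K := isCompact_iff_compactSpace.mp hK
  let f : Y × K → X := fun p ↦ S p.1 + p.2
  have hf : Continuous f := by fun_prop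
  have image_eq : T '' B = Prod.fst '' {p : Y × K | f p ∈ B ∧ T (f p) = p.1} := by
    ext y
    constructor
    · rintro ⟨x, hx, rfl⟩
      obtain ⟨k, hk, hxk⟩ := hBK x hx
      have hfx : f (T x, ⟨k, hk⟩) = x := hxk.symm
      exact ⟨(T x, ⟨k, hk⟩), ⟨hfx.symm ▸ hx, congrArg T hfx⟩, rfl⟩
    · rintro ⟨p, ⟨hpB, hp⟩, rfl⟩
      exact ⟨f p, hpB, hp⟩
  rw [image_eq]
  exact isClosedMap_fst_of_compactSpace _
    ((hB.preimage hf).inter (isClosed_eq (hT.comp hf) continuous_fst))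

theorem exists_pos_forall_le_norm_of_isClosed_image {α F : Type*} [SeminormedAddCommGroup F]
    {f : α → F} {A : Set α} (hfA : IsClosed (f '' A)) (hA : ∀ x ∈ A, f x ≠ 0) :
    ∃ δ > 0, ∀ x ∈ A, δ ≤ ‖f x‖ := by
  have zero_notMem : (0 : F) ∉ f '' A := fun ⟨x, hx, hfx⟩ ↦ hA x hx hfx
  obtain ⟨δ, hδ, hball⟩ := Metric.isOpen_iff.mp hfA.isOpen_compl 0 zero_notMem
  refine ⟨δ, hδ, fun x hx ↦ ?_⟩
  by_contra! hlt
  exact hball (mem_ball_zero_iff.mpr hlt) ⟨x, hx, rfl⟩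

section NormedSpace

variable {𝕜 E F : Type*} [NontriviallyNormedField 𝕜] [SeminormedAddCommGroup E] [NormedSpace 𝕜 E]
  [NormedAddCommGroup F] [NormedSpace 𝕜 F] {T : E →L[𝕜] F}

theorem rescale_to_shell_mkQ (N : Submodule 𝕜 E) {c : 𝕜} (hc : 1 < ‖c‖) {x : E}
    (hx : ‖N.mkQ x‖ ≠ 0) :
    ∃ d : 𝕜, d ≠ 0 ∧ ∃ z : E, z - d • x ∈ N ∧ ‖z‖ < 1 ∧ 1 / ‖c‖ ≤ ‖N.mkQ z‖ := by
  obtain ⟨d, hd, hlt, hle, -⟩ := rescale_to_shell_semi_normed hc one_pos hx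
  obtain ⟨z, hz, hz1⟩ := Submodule.Quotient.norm_mk_lt (d • N.mkQ x) (sub_pos.mpr hlt)
  refine ⟨d, hd, z, (Submodule.Quotient.eq N).mp hz, ?_, ?_⟩
  · linarith
  · rwa [Submodule.mkQ_apply, hz]

theorem exists_pos_forall_exists_preimage_norm_le
    (hT : ∀ B : Set E, IsClosed B → IsBounded B → IsClosed (T '' B)) :
    ∃ C > 0, ∀ x, ∃ x', T x' = T x ∧ ‖x'‖ ≤ C * ‖T x‖ := by
  obtain ⟨c, hc⟩ := NormedField.exists_one_lt_norm 𝕜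
  let N : Submodule 𝕜 E := T.ker
  have norm_mk_eq_zero {x : E} : ‖N.mkQ x‖ = 0 ↔ T x = 0 :=
    QuotientAddGroup.norm_mk_eq_zero (S := N.toAddSubgroup) (hS := T.isClosed_ker)
  let A : Set E := closedBall 0 1 ∩ {x | 1 / ‖c‖ ≤ ‖N.mkQ x‖}
  have isClosed_A : IsClosed A :=
    isClosed_closedBall.inter (isClosed_le continuous_const N.mkQL.continuous.norm)
  have apply_ne_zero : ∀ x ∈ A, T x ≠ 0 := fun x hx hTx ↦ by
    have : 0 < 1 / ‖c‖ := by positivity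
    exact (this.trans_le hx.2).ne' (norm_mk_eq_zero.mpr hTx)
  obtain ⟨δ, hδ, hδA⟩ := exists_pos_forall_le_norm_of_isClosed_image
    (hT A isClosed_A (isBounded_closedBall.subset Set.inter_subset_left)) apply_ne_zero
  refine ⟨δ⁻¹, inv_pos.mpr hδ, fun x ↦ ?_⟩
  by_cases hTx : T x = 0
  · exact ⟨0, by simp [hTx]⟩
  obtain ⟨d, hd, z, hzx, hz1, hcz⟩ := rescale_to_shell_mkQ N hc (mt norm_mk_eq_zero.mp hTx)
  have hTz : T z = d • T x := by simpa [N, sub_eq_zero] using hzx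
  have hz : ‖z‖ ≤ δ⁻¹ * ‖T z‖ := by
    rw [inv_mul_eq_div, le_div_iff₀ hδ]
    exact (mul_le_of_le_one_left hδ.le hz1.le).trans
      (hδA z ⟨mem_closedBall_zero_iff.mpr hz1.le, hcz⟩)
  refine ⟨d⁻¹ • z, by rw [map_smul, hTz, inv_smul_smul₀ hd], ?_⟩
  calc ‖d⁻¹ • z‖ = ‖d⁻¹‖ * ‖z‖ := norm_smul _ _
    _ ≤ ‖d⁻¹‖ * (δ⁻¹ * ‖T z‖) := by gcongr
    _ = δ⁻¹ * ‖d⁻¹ • T z‖ := by rw [norm_smul, mul_left_comm]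
    _ = δ⁻¹ * ‖T x‖ := by rw [hTz, inv_smul_smul₀ hd]

theorem isClosed_range_of_forall_isClosed_image
    (hT : ∀ B : Set E, IsClosed B → IsBounded B → IsClosed (T '' B)) :
    IsClosed (Set.range T) := by
  obtain ⟨C, hC, hpre⟩ := exists_pos_forall_exists_preimage_norm_le hT
  refine isClosed_of_closure_subset fun y hy ↦ ?_
  let B : Set E := closedBall 0 (C * (‖y‖ + 1))
  have range_inter_ball_subset : ball y 1 ∩ Set.range T ⊆ T '' B := by
    rintro _ ⟨hxy, x, rfl⟩
    obtain ⟨x', hx', hle⟩ := hpre x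
    refine ⟨x', mem_closedBall_zero_iff.mpr (hle.trans ?_), hx'⟩
    gcongr
    linarith [norm_le_norm_add_norm_sub' (T x) y, mem_ball_iff_norm.mp hxy]
  have mem_closure : y ∈ closure (ball y 1 ∩ Set.range T) :=
    isOpen_ball.inter_closure ⟨mem_ball_self one_pos, hy⟩
  have mem_image : y ∈ T '' B :=
    closure_minimal range_inter_ball_subset (hT B isClosed_closedBall isBounded_closedBall)
      mem_closure
  exact Set.image_subset_range T B mem_image

theorem isClosed_range_of_isCompactOperator_id_sub_comp {S : F →L[𝕜] E}
    (hS : IsCompactOperator ⇑(ContinuousLinearMap.id 𝕜 E - S ∘L T)) :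
    IsClosed (Set.range T) := by
  refine isClosed_range_of_forall_isClosed_image fun B hB hbdd ↦ ?_
  obtain ⟨K, hK, hBK⟩ := IsCompactOperator.image_subset_compact_of_bounded
    (f := (ContinuousLinearMap.id 𝕜 E - S ∘L T).toLinearMap) hS hbdd
  refine isClosed_image_of_forall_exists_eq_add T.continuous S.continuous hB hK fun x hx ↦ ?_
  exact ⟨x - S (T x), hBK ⟨x, hx, rfl⟩, (add_sub_cancel _ _).symm⟩

end NormedSpace

theorem stmt6_general {𝕜 W : Type*} [NontriviallyNormedField 𝕜] [NormedAddCommGroup W]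
    [NormedSpace 𝕜 W] (C : W →L[𝕜] W) (hC : IsCompactOperator ⇑(C ∘L C)) :
    IsClosed (Set.range ⇑(ContinuousLinearMap.id 𝕜 W + C)) := by
  let I := ContinuousLinearMap.id 𝕜 W
  have id_sub_comp : I - (I - C) ∘L (I + C) = C ∘L C := by
    ext x
    simp [I]
  exact isClosed_range_of_isCompactOperator_id_sub_comp (S := I - C) (id_sub_comp ▸ hC)

/-- if `W` is a real Banach space and `C : W → W` is a continuous linear
operator such that `C² = C ∘ C` is compact, then the range of `I + C` is a closed
subspace of `W`. -/
theorem stmt6 (W : Type*) [NormedAddCommGroup W] [NormedSpace ℝ W] [CompleteSpace W]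
    (C : W →L[ℝ] W) (hC : IsCompactOperator ⇑(C ∘L C)) :
    IsClosed (Set.range ⇑(ContinuousLinearMap.id ℝ W + C)) :=
  stmt6_general C hC
end

section
/- Assume a, d ∈ L^∞((0,1);ℝ), b, c : [0,1] → ℝ of bounded variation, and |r₀r₁| ≠ e^{α(1)+δ(1)}. Then the set of integers k ∈ ℤ for which there exists a pair (u,v) ≠ (0,0) of absolutely continuous functions [0,1] → ℂ satisfying u'(x) + (a(x) + ikω) u(x) + b(x) v(x) = 0 and v'(x) − (d(x) + ikω) v(x) + c(x) u(x) = 0 for almost every x ∈ (0,1), together with u(0) = r₀ v(0) and v(1) = r₁ u(1), is finite. -/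
open MeasureTheory Set

/-- `u` is absolutely continuous on `[0,1]` with (a.e.) derivative `u'`:
`u'` is integrable on `[0,1]` and `u` is the integral of `u'` there. -/
def IsACOn01 (u u' : ℝ → ℂ) : Prop :=
  IntervalIntegrable u' volume 0 1 ∧
  ∀ x ∈ Icc (0 : ℝ) 1, u x = u 0 + ∫ y in (0 : ℝ)..x, u' y

open Filter Topology

/-!
Multiplying `u` and `v` by integrating factors removes the diagonal terms of the system and turns
the coupling coefficients into integrable functions times `exp (± 2itx)`, where `t = kω`. By the
Riemann–Lebesgue lemma, uniformly in the endpoint, the primitives of these oscillating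
coefficients tend to zero as `|t| → ∞`; after one integration by parts, a solution therefore varies
on `[0,1]` by at most a small multiple of its maximum. The two boundary conditions multiply the
modulus of an almost constant solution by `|r₀r₁| exp (-(α(1) + δ(1)))`, which differs from `1`,
so for large `|k|` the solution vanishes.
-/

section AbsolutelyContinuous

theorem absolutelyContinuousOnInterval_of_dist_le_mul {X Y : Type*} [PseudoMetricSpace X]
    [PseudoMetricSpace Y] {f : ℝ → X} {g : ℝ → Y} {a b K : ℝ}
    (hg : AbsolutelyContinuousOnInterval g a b)
    (h : ∀ x ∈ uIcc a b, ∀ y ∈ uIcc a b, dist (f x) (f y) ≤ K * dist (g x) (g y)) :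
    AbsolutelyContinuousOnInterval f a b := by
  refine squeeze_zero' (Eventually.of_forall fun E ↦ Finset.sum_nonneg fun i _ ↦ dist_nonneg) ?_
    (by simpa using Tendsto.const_mul K hg)
  filter_upwards [mem_inf_of_right (mem_principal_self _)] with E hE
  rw [Finset.mul_sum]
  exact Finset.sum_le_sum fun i hi ↦ h _ (hE.1 i hi).1 _ (hE.1 i hi).2

variable {E : Type*} [NormedAddCommGroup E] [NormedSpace ℝ E] {f f' : ℝ → E} {a b : ℝ}

theorem dist_integral_le_dist_integral_norm (hf : IntervalIntegrable f volume a b) {x y : ℝ}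
    (hx : x ∈ uIcc a b) (hy : y ∈ uIcc a b) :
    dist (∫ s in a..x, f s) (∫ s in a..y, f s) ≤
      dist (∫ s in a..x, ‖f s‖) (∫ s in a..y, ‖f s‖) := by
  have hax := hf.mono_set (uIcc_subset_uIcc_left hx)
  have hay := hf.mono_set (uIcc_subset_uIcc_left hy)
  rw [dist_eq_norm, Real.dist_eq, intervalIntegral.integral_interval_sub_left hax hay,
    intervalIntegral.integral_interval_sub_left hax.norm hay.norm]
  exact intervalIntegral.norm_integral_le_abs_integral_norm

theorem absolutelyContinuousOnInterval_integral (hf : IntervalIntegrable f volume a b) :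
    AbsolutelyContinuousOnInterval (fun x ↦ ∫ s in a..x, f s) a b :=
  absolutelyContinuousOnInterval_of_dist_le_mul (K := 1)
    (hf.norm.absolutelyContinuousOnInterval_intervalIntegral left_mem_uIcc)
    fun _ hx _ hy ↦ by simpa using dist_integral_le_dist_integral_norm hf hx hy

theorem absolutelyContinuousOnInterval_comp_of_contDiff {F : Type*} [NormedAddCommGroup F]
    [NormedSpace ℝ F] [ProperSpace E] {g : E → F} (hg : ContDiff ℝ 1 g)
    (hf : AbsolutelyContinuousOnInterval f a b) :
    AbsolutelyContinuousOnInterval (fun x ↦ g (f x)) a b := by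
  obtain ⟨C, hC⟩ := hf.exists_bound
  obtain ⟨K, hK⟩ := hg.contDiffOn.exists_lipschitzOnWith one_ne_zero
    (convex_closedBall (0 : E) C) (isCompact_closedBall 0 C)
  have hmem : ∀ x ∈ uIcc a b, f x ∈ Metric.closedBall 0 C := fun x hx ↦
    mem_closedBall_zero_iff.2 (hC x hx)
  exact absolutelyContinuousOnInterval_of_dist_le_mul hf fun x hx y hy ↦
    hK.dist_le_mul _ (hmem x hx) _ (hmem y hy)

theorem ae_restrict_hasDerivAt_of_eq_add_integral [CompleteSpace E]
    (hf' : IntervalIntegrable f' volume a b)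
    (hf : ∀ x ∈ Icc a b, f x = f a + ∫ s in a..x, f' s) :
    ∀ᵐ x ∂volume.restrict (Ioo a b), HasDerivAt f (f' x) x := by
  rw [ae_restrict_iff' measurableSet_Ioo]
  filter_upwards [hf'.ae_hasDerivAt_integral] with x hderiv hx
  refine ((hderiv (Ioo_subset_Icc_self.trans Icc_subset_uIcc hx) a left_mem_uIcc).const_add
    (f a)).congr_of_eventuallyEq ?_
  filter_upwards [Ioo_mem_nhds hx.1 hx.2] with y hy using hf y (Ioo_subset_Icc_self hy)

theorem eq_add_integral_of_ae_restrict_hasDerivAt [CompleteSpace E]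
    (hf' : IntervalIntegrable f' volume a b) (hf : AbsolutelyContinuousOnInterval f a b)
    (hderiv : ∀ᵐ x ∂volume.restrict (Ioo a b), HasDerivAt f (f' x) x) {x : ℝ} (hx : x ∈ Icc a b) :
    f x = f a + ∫ s in a..x, f' s := by
  have hab : a ≤ b := hx.1.trans hx.2
  rw [← uIcc_of_le hab] at hx
  rw [Measure.restrict_congr_set Ioo_ae_eq_Icc, ae_restrict_iff' measurableSet_Icc,
    ← uIcc_of_le hab] at hderiv
  obtain ⟨C, hC⟩ := (hf.fun_sub
    (absolutelyContinuousOnInterval_integral hf')).const_of_ae_hasDerivAt_zero (by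
      filter_upwards [hderiv, hf'.ae_hasDerivAt_integral] with y hfy hint hy
      simpa using (hfy hy).fun_sub (hint hy a left_mem_uIcc))
  have h_const := (hC x hx).trans (hC a left_mem_uIcc).symm
  rwa [intervalIntegral.integral_same, sub_zero, sub_eq_iff_eq_add] at h_const

end AbsolutelyContinuous

namespace IsACOn01

variable {u u' v v' : ℝ → ℂ}

theorem absolutelyContinuousOnInterval (hu : IsACOn01 u u') :
    AbsolutelyContinuousOnInterval u 0 1 := by
  refine absolutelyContinuousOnInterval_of_dist_le_mul (K := 1)
    (absolutelyContinuousOnInterval_integral hu.1) fun x hx y hy ↦ ?_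
  rw [uIcc_of_le zero_le_one] at hx hy
  rw [hu.2 x hx, hu.2 y hy, dist_add_left, one_mul]

theorem continuousOn (hu : IsACOn01 u u') : ContinuousOn u (uIcc 0 1) :=
  hu.absolutelyContinuousOnInterval.continuousOn

theorem ae_hasDerivAt (hu : IsACOn01 u u') :
    ∀ᵐ x ∂volume.restrict (Ioo 0 1), HasDerivAt u (u' x) x :=
  ae_restrict_hasDerivAt_of_eq_add_integral hu.1 hu.2

theorem of_ae_hasDerivAt (hu' : IntervalIntegrable u' volume 0 1)
    (hu : AbsolutelyContinuousOnInterval u 0 1)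
    (hderiv : ∀ᵐ x ∂volume.restrict (Ioo 0 1), HasDerivAt u (u' x) x) : IsACOn01 u u' :=
  ⟨hu', fun _ hx ↦ eq_add_integral_of_ae_restrict_hasDerivAt hu' hu hderiv hx⟩

theorem congr_deriv (hu : IsACOn01 u u')
    (h : ∀ᵐ x ∂volume.restrict (Ioo 0 1), u' x = v' x) : IsACOn01 u v' := by
  refine of_ae_hasDerivAt (hu.1.congr_ae ?_) hu.absolutelyContinuousOnInterval ?_
  · rwa [uIoc_of_le zero_le_one, ← Measure.restrict_congr_set Ioo_ae_eq_Ioc]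
  · filter_upwards [hu.ae_hasDerivAt, h] with x hx heq using heq ▸ hx

theorem mul (hu : IsACOn01 u u') (hv : IsACOn01 v v') :
    IsACOn01 (fun x ↦ u x * v x) (fun x ↦ u' x * v x + u x * v' x) := by
  refine of_ae_hasDerivAt ((hu.1.mul_continuousOn hv.continuousOn).add
    (hv.1.continuousOn_mul hu.continuousOn))
    (hu.absolutelyContinuousOnInterval.smul hv.absolutelyContinuousOnInterval) ?_
  filter_upwards [hu.ae_hasDerivAt, hv.ae_hasDerivAt] with x hux hvx using hux.mul hvx

theorem cexp (hu : IsACOn01 u u') :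
    IsACOn01 (fun x ↦ Complex.exp (u x)) (fun x ↦ Complex.exp (u x) * u' x) := by
  refine of_ae_hasDerivAt (hu.1.continuousOn_mul hu.continuousOn.cexp)
    (absolutelyContinuousOnInterval_comp_of_contDiff Complex.contDiff_exp
      hu.absolutelyContinuousOnInterval) ?_
  filter_upwards [hu.ae_hasDerivAt] with x hux using hux.cexp

theorem integral_zero_left (hu' : IntervalIntegrable u' volume 0 1) :
    IsACOn01 (fun x ↦ ∫ y in (0 : ℝ)..x, u' y) u' :=
  ⟨hu', fun _ _ ↦ by simp⟩

theorem cexp_mul_of_linear_ode {p P g : ℝ → ℂ} (hP : IsACOn01 P p) (hu : IsACOn01 u u')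
    (h : ∀ᵐ x ∂volume.restrict (Ioo 0 1), u' x + p x * u x + g x = 0) :
    IsACOn01 (fun x ↦ Complex.exp (P x) * u x) (fun x ↦ -(Complex.exp (P x) * g x)) := by
  refine (hP.cexp.mul hu).congr_deriv ?_
  filter_upwards [h] with x hx
  linear_combination Complex.exp (P x) * hx

end IsACOn01

section RiemannLebesgue

theorem tendsto_const_mul_cocompact {c : ℝ} (hc : c ≠ 0) :
    Tendsto (fun t : ℝ ↦ c * t) (cocompact ℝ) (cocompact ℝ) :=
  (Homeomorph.mulLeft₀ c hc).isClosedEmbedding.tendsto_cocompact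

theorem tendstoUniformlyOn_zero_of_dist_le {ι α E : Type*} [TopologicalSpace α]
    [SeminormedAddCommGroup E] {l : Filter ι} {F : ι → α → E} {φ : α → ℝ} {s : Set α}
    (hs : IsCompact s) (hφ : ContinuousOn φ s)
    (hF : ∀ i, ∀ x ∈ s, ∀ y ∈ s, dist (F i x) (F i y) ≤ dist (φ x) (φ y))
    (hlim : ∀ x ∈ s, Tendsto (F · x) l (𝓝 0)) : TendstoUniformlyOn F 0 l s := by
  rw [← tendstoLocallyUniformlyOn_iff_tendstoUniformlyOn_of_compact hs,
    Metric.tendstoLocallyUniformlyOn_iff]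
  intro ε hε x hx
  refine ⟨s ∩ {y | dist (φ y) (φ x) < ε / 2}, inter_mem self_mem_nhdsWithin
    (Metric.tendsto_nhds.1 (hφ x hx) _ (half_pos hε)), ?_⟩
  filter_upwards [Metric.tendsto_nhds.1 (hlim x hx) _ (half_pos hε)] with i hi y hy
  calc dist 0 (F i y) ≤ dist (F i y) (F i x) + dist (F i x) 0 := by
        rw [dist_comm]; exact dist_triangle _ _ _
    _ < ε / 2 + ε / 2 := add_lt_add ((hF i y hy.1 x hx).trans_lt hy.2) hi
    _ = ε := add_halves ε

variable {E : Type*} [NormedAddCommGroup E] [NormedSpace ℂ E] {f : ℝ → E} {a b : ℝ}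

theorem tendsto_integral_cexp_smul_cocompact (f : ℝ → E) :
    Tendsto (fun t : ℝ ↦ ∫ y, Complex.exp ((t * y : ℝ) * Complex.I) • f y)
      (cocompact ℝ) (𝓝 0) := by
  have hne : -(2 * Real.pi)⁻¹ ≠ 0 := neg_ne_zero.2 (inv_ne_zero Real.two_pi_pos.ne')
  refine ((Real.tendsto_integral_exp_smul_cocompact f).comp
    (tendsto_const_mul_cocompact hne)).congr fun t ↦ integral_congr_ae (.of_forall fun y ↦ ?_)
  have hphase : 2 * Real.pi * -(y * (-(2 * Real.pi)⁻¹ * t)) = t * y := by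
    field_simp
  simp only [Circle.smul_def, Real.fourierChar_apply, hphase]

theorem tendsto_intervalIntegral_cexp_smul_cocompact (f : ℝ → E) (a b : ℝ) :
    Tendsto (fun t : ℝ ↦ ∫ y in a..b, Complex.exp ((t * y : ℝ) * Complex.I) • f y)
      (cocompact ℝ) (𝓝 0) := by
  simp only [intervalIntegral.intervalIntegral_eq_integral_uIoc,
    ← integral_indicator measurableSet_uIoc, indicator_smul]
  simpa only [smul_zero] using (tendsto_integral_cexp_smul_cocompact
    ((uIoc a b).indicator f)).const_smul (if a ≤ b then (1 : ℝ) else -1)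

theorem intervalIntegrable_cexp_smul (hf : IntervalIntegrable f volume a b) (t : ℝ) :
    IntervalIntegrable (fun y ↦ Complex.exp ((t * y : ℝ) * Complex.I) • f y) volume a b :=
  hf.continuousOn_smul (by fun_prop)

theorem norm_cexp_smul (t y : ℝ) (z : E) :
    ‖Complex.exp ((t * y : ℝ) * Complex.I) • z‖ = ‖z‖ := by
  rw [norm_smul, Complex.norm_exp_ofReal_mul_I, one_mul]

theorem tendstoUniformlyOn_intervalIntegral_cexp_smul (hf : IntervalIntegrable f volume a b) :
    TendstoUniformlyOn
      (fun t x : ℝ ↦ ∫ y in a..x, Complex.exp ((t * y : ℝ) * Complex.I) • f y) 0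
      (cocompact ℝ) (uIcc a b) := by
  refine tendstoUniformlyOn_zero_of_dist_le isCompact_uIcc
    (intervalIntegral.continuousOn_primitive_interval' hf.norm left_mem_uIcc)
    (fun t x hx y hy ↦ ?_) fun x _ ↦ tendsto_intervalIntegral_cexp_smul_cocompact f a x
  simpa only [norm_cexp_smul] using
    dist_integral_le_dist_integral_norm (intervalIntegrable_cexp_smul hf t) hx hy

theorem eventually_norm_integral_cexp_smul_le {s ε : ℝ}
    (hf : IntervalIntegrable f volume a b) (hs : s ≠ 0) (hε : 0 < ε) :
    ∀ᶠ t in cocompact ℝ, ∀ x ∈ uIcc a b,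
      ‖∫ y in a..x, Complex.exp ((s * t * y : ℝ) * Complex.I) • f y‖ ≤ ε := by
  filter_upwards [(tendsto_const_mul_cocompact hs).eventually
    (Metric.tendstoUniformlyOn_iff.1 (tendstoUniformlyOn_intervalIntegral_cexp_smul hf) ε hε)]
    with t ht x hx
  simpa only [Pi.zero_apply, dist_zero_left] using (ht x hx).le

end RiemannLebesgue

theorem abs_one_sub_mul_mul_le {r ρ η x y : ℝ} (hρ : 0 ≤ ρ) (hx : |x - r * y| ≤ η)
    (hy : |ρ * x - y| ≤ η) : |(1 - ρ * r) * y| ≤ (1 + ρ) * η := by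
  calc |(1 - ρ * r) * y| = |ρ * (x - r * y) - (ρ * x - y)| := by ring_nf
    _ ≤ ρ * |x - r * y| + |ρ * x - y| := by
        simpa only [abs_mul, abs_of_nonneg hρ] using abs_sub (ρ * (x - r * y)) (ρ * x - y)
    _ ≤ ρ * η + η := by gcongr
    _ = (1 + ρ) * η := by ring

/-- The off-diagonal system `U' = -PV`, `V' = -QU` on `[0,1]`, to which the gauge factors below
reduce the mode equations. -/
structure IsOffDiagonalSolution (P Q U V : ℝ → ℂ) : Prop where
  left : IsACOn01 U (fun x ↦ -(P x * V x))
  right : IsACOn01 V (fun x ↦ -(Q x * U x))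

namespace IsOffDiagonalSolution

variable {P Q U V : ℝ → ℂ} {ε r ρ K M : ℝ}

theorem swap (h : IsOffDiagonalSolution P Q U V) : IsOffDiagonalSolution Q P V U :=
  ⟨h.right, h.left⟩

theorem sub_eq_integral (h : IsOffDiagonalSolution P Q U V) (hP : IntervalIntegrable P volume 0 1)
    {x : ℝ} (hx : x ∈ Icc (0 : ℝ) 1) :
    U x - U 0 = -((∫ y in (0 : ℝ)..x, P y) * V x) +
      ∫ y in (0 : ℝ)..x, (∫ s in (0 : ℝ)..y, P s) * -(Q y * U y) := by
  have hE := IsACOn01.integral_zero_left hP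
  have hsub : uIcc 0 x ⊆ uIcc (0 : ℝ) 1 :=
    uIcc_subset_uIcc_left (by rwa [uIcc_of_le zero_le_one])
  have h_parts := (hE.mul h.right).2 x hx
  rw [intervalIntegral.integral_add ((hP.mul_continuousOn h.right.continuousOn).mono_set hsub)
    ((h.right.1.continuousOn_mul hE.continuousOn).mono_set hsub)] at h_parts
  simp only [intervalIntegral.integral_same, zero_mul, zero_add] at h_parts
  have h_left := h.left.2 x hx
  rw [intervalIntegral.integral_neg] at h_left
  linear_combination h_left + h_parts

theorem norm_sub_le (h : IsOffDiagonalSolution P Q U V) (hP : IntervalIntegrable P volume 0 1)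
    (hQ : IntervalIntegrable Q volume 0 1)
    (hPε : ∀ x ∈ Icc (0 : ℝ) 1, ‖∫ y in (0 : ℝ)..x, P y‖ ≤ ε)
    (hQK : ∫ y in (0 : ℝ)..1, ‖Q y‖ ≤ K)
    (hU : ∀ x ∈ Icc (0 : ℝ) 1, ‖U x‖ ≤ M) (hV : ∀ x ∈ Icc (0 : ℝ) 1, ‖V x‖ ≤ M)
    {x : ℝ} (hx : x ∈ Icc (0 : ℝ) 1) :
    ‖U x - U 0‖ ≤ ε * (1 + K) * M := by
  have hε : 0 ≤ ε := (norm_nonneg _).trans (hPε x hx)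
  have hM : 0 ≤ M := (norm_nonneg _).trans (hU x hx)
  have h_boundary : ‖(∫ y in (0 : ℝ)..x, P y) * V x‖ ≤ ε * M := by
    rw [norm_mul]
    exact mul_le_mul (hPε x hx) (hV x hx) (norm_nonneg _) hε
  have h_integrand : ∀ y ∈ Ioc 0 x,
      ‖(∫ s in (0 : ℝ)..y, P s) * -(Q y * U y)‖ ≤ ε * M * ‖Q y‖ := by
    intro y hy
    have hy' : y ∈ Icc (0 : ℝ) 1 := ⟨hy.1.le, hy.2.trans hx.2⟩
    rw [norm_mul, norm_neg, norm_mul, mul_assoc, mul_comm M]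
    gcongr
    exacts [hPε y hy', hU y hy']
  have h_integral : ‖∫ y in (0 : ℝ)..x, (∫ s in (0 : ℝ)..y, P s) * -(Q y * U y)‖ ≤
      ε * M * K := by
    have hsub : uIcc 0 x ⊆ uIcc (0 : ℝ) 1 :=
      uIcc_subset_uIcc_left (by rwa [uIcc_of_le zero_le_one])
    calc _ ≤ ∫ y in (0 : ℝ)..x, ε * M * ‖Q y‖ :=
          intervalIntegral.norm_integral_le_of_norm_le hx.1 (.of_forall h_integrand)
            ((hQ.norm.mono_set hsub).const_mul _)
      _ = ε * M * ∫ y in (0 : ℝ)..x, ‖Q y‖ := intervalIntegral.integral_const_mul _ _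
      _ ≤ ε * M * K := by
          gcongr
          exact (intervalIntegral.integral_mono_interval le_rfl hx.1 hx.2
            (.of_forall fun y ↦ norm_nonneg _) hQ.norm).trans hQK
  calc ‖U x - U 0‖ ≤ _ := h.sub_eq_integral hP hx ▸ norm_add_le _ _
    _ ≤ ε * M + ε * M * K := by
        rw [norm_neg]; exact add_le_add h_boundary h_integral
    _ = ε * (1 + K) * M := by ring

theorem exists_norm_le_max (h : IsOffDiagonalSolution P Q U V) :
    ∃ x₁ ∈ Icc (0 : ℝ) 1, ∀ x ∈ Icc (0 : ℝ) 1,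
      ‖U x‖ ≤ max ‖U x₁‖ ‖V x₁‖ ∧ ‖V x‖ ≤ max ‖U x₁‖ ‖V x₁‖ := by
  have hcont := h.left.continuousOn.norm.sup h.right.continuousOn.norm
  rw [uIcc_of_le zero_le_one] at hcont
  obtain ⟨x₁, hx₁, hmax⟩ := isCompact_Icc.exists_isMaxOn (nonempty_Icc.2 zero_le_one) hcont
  exact ⟨x₁, hx₁, fun x hx ↦ max_le_iff.1 (hmax hx)⟩

theorem eq_zero_of_norm_integral_le (h : IsOffDiagonalSolution P Q U V)
    (hP : IntervalIntegrable P volume 0 1) (hQ : IntervalIntegrable Q volume 0 1)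
    (hPε : ∀ x ∈ Icc (0 : ℝ) 1, ‖∫ y in (0 : ℝ)..x, P y‖ ≤ ε)
    (hQε : ∀ x ∈ Icc (0 : ℝ) 1, ‖∫ y in (0 : ℝ)..x, Q y‖ ≤ ε)
    (hPK : ∫ y in (0 : ℝ)..1, ‖P y‖ ≤ K) (hQK : ∫ y in (0 : ℝ)..1, ‖Q y‖ ≤ K)
    (hr : 0 ≤ r) (hρ : 0 ≤ ρ) (h_zero : ‖U 0‖ = r * ‖V 0‖) (h_one : ‖V 1‖ = ρ * ‖U 1‖)
    (hε : ε * (1 + K) * ((1 + r) * (1 + ρ) + |1 - ρ * r|) < |1 - ρ * r|)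
    {x : ℝ} (hx : x ∈ Icc (0 : ℝ) 1) : U x = 0 ∧ V x = 0 := by
  obtain ⟨x₁, hx₁, hbound⟩ := h.exists_norm_le_max
  set M := max ‖U x₁‖ ‖V x₁‖
  set η := ε * (1 + K)
  set D := |1 - ρ * r|
  have hU_var : ∀ y ∈ Icc (0 : ℝ) 1, |‖U y‖ - ‖U 0‖| ≤ η * M := fun y hy ↦
    (abs_norm_sub_norm_le _ _).trans <| h.norm_sub_le hP hQ hPε hQK
      (fun z hz ↦ (hbound z hz).1) (fun z hz ↦ (hbound z hz).2) hy
  have hV_var : ∀ y ∈ Icc (0 : ℝ) 1, |‖V y‖ - ‖V 0‖| ≤ η * M := fun y hy ↦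
    (abs_norm_sub_norm_le _ _).trans <| h.swap.norm_sub_le hQ hP hQε hPK
      (fun z hz ↦ (hbound z hz).2) (fun z hz ↦ (hbound z hz).1) hy
  have h_reflect : D * ‖V 0‖ ≤ (1 + ρ) * (η * M) := by
    rw [← abs_norm (V 0), ← abs_mul]
    have h_right := right_mem_Icc.2 (zero_le_one (α := ℝ))
    exact abs_one_sub_mul_mul_le hρ (h_zero ▸ hU_var 1 h_right) (h_one ▸ hV_var 1 h_right)
  have hM_le : M ≤ (1 + r) * ‖V 0‖ + η * M := by
    have hU₁ := (abs_le.1 (hU_var x₁ hx₁)).2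
    have hV₁ := (abs_le.1 (hV_var x₁ hx₁)).2
    have hrV : 0 ≤ r * ‖V 0‖ := by positivity
    exact max_le (by linarith [norm_nonneg (V 0)]) (by linarith)
  have hM_nonpos : M ≤ 0 := by
    have h_self : D * M ≤ η * ((1 + r) * (1 + ρ) + D) * M :=
      calc D * M ≤ D * ((1 + r) * ‖V 0‖ + η * M) := by gcongr
        _ = (1 + r) * (D * ‖V 0‖) + D * (η * M) := by ring
        _ ≤ (1 + r) * ((1 + ρ) * (η * M)) + D * (η * M) := by gcongr
        _ = η * ((1 + r) * (1 + ρ) + D) * M := by ring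
    by_contra! hM_pos
    exact (mul_lt_mul_of_pos_right hε hM_pos).not_ge h_self
  exact ⟨norm_le_zero_iff.1 ((hbound x hx).1.trans hM_nonpos),
    norm_le_zero_iff.1 ((hbound x hx).2.trans hM_nonpos)⟩

end IsOffDiagonalSolution

section Gauge

/-- The integrating factor of `u' + (p + it)u`, normalised to equal `1` at `0`. -/
noncomputable def gaugeFactor (p : ℝ → ℂ) (t x : ℝ) : ℂ :=
  Complex.exp ((∫ y in (0 : ℝ)..x, p y) + (t * x : ℝ) * Complex.I)

/-- The coupling coefficient `b` of `v` in the equation for `u`, after `u` and `v` have been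
multiplied by the non-oscillating parts of `gaugeFactor p t` and `gaugeFactor q (-t)`. -/
noncomputable def gaugedCoupling (p q b : ℝ → ℂ) (x : ℝ) : ℂ :=
  Complex.exp ((∫ y in (0 : ℝ)..x, p y) - ∫ y in (0 : ℝ)..x, q y) * b x

variable {p q b c u v u' v' : ℝ → ℂ} {r₀ r₁ : ℂ}

theorem gaugeFactor_zero (p : ℝ → ℂ) (t : ℝ) : gaugeFactor p t 0 = 1 := by
  simp [gaugeFactor]

theorem norm_gaugeFactor (p : ℝ → ℂ) (t x : ℝ) :
    ‖gaugeFactor p t x‖ = Real.exp (∫ y in (0 : ℝ)..x, p y).re := by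
  rw [gaugeFactor, Complex.exp_add, norm_mul, Complex.norm_exp_ofReal_mul_I, mul_one,
    Complex.norm_exp]

theorem gaugeFactor_ne_zero (p : ℝ → ℂ) (t x : ℝ) : gaugeFactor p t x ≠ 0 :=
  Complex.exp_ne_zero _

theorem intervalIntegrable_gaugedCoupling (hp : IntervalIntegrable p volume 0 1)
    (hq : IntervalIntegrable q volume 0 1) (hb : IntervalIntegrable b volume 0 1) :
    IntervalIntegrable (gaugedCoupling p q b) volume 0 1 :=
  hb.continuousOn_mul ((IsACOn01.integral_zero_left hp).continuousOn.sub
    (IsACOn01.integral_zero_left hq).continuousOn).cexp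

theorem gaugeFactor_mul_eq (p q b : ℝ → ℂ) (t x : ℝ) :
    gaugeFactor p t x * b x = Complex.exp ((2 * t * x : ℝ) * Complex.I) • gaugedCoupling p q b x *
      gaugeFactor q (-t) x := by
  have h_exp : gaugeFactor p t x = Complex.exp ((2 * t * x : ℝ) * Complex.I) *
      Complex.exp ((∫ y in (0 : ℝ)..x, p y) - ∫ y in (0 : ℝ)..x, q y) * gaugeFactor q (-t) x := by
    rw [gaugeFactor, gaugeFactor, ← Complex.exp_add, ← Complex.exp_add]
    congr 1
    push_cast
    ring
  rw [h_exp, gaugedCoupling, smul_eq_mul]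
  ring

theorem IsACOn01.gaugeFactor_mul (hp : IntervalIntegrable p volume 0 1) (q : ℝ → ℂ) (t : ℝ)
    (hu : IsACOn01 u u')
    (h : ∀ᵐ x ∂volume.restrict (Ioo 0 1), u' x + (p x + t * Complex.I) * u x + b x * v x = 0) :
    IsACOn01 (fun x ↦ gaugeFactor p t x * u x) (fun x ↦
      -(Complex.exp ((2 * t * x : ℝ) * Complex.I) • gaugedCoupling p q b x *
        (gaugeFactor q (-t) x * v x))) := by
  have h_exponent : IsACOn01 (fun x ↦ (∫ y in (0 : ℝ)..x, p y) + (t * x : ℝ) * Complex.I)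
      (fun x ↦ p x + t * Complex.I) := by
    refine ⟨hp.add intervalIntegrable_const, fun x hx ↦ ?_⟩
    have hpx := hp.mono_set (uIcc_subset_uIcc_left (by rwa [uIcc_of_le zero_le_one]))
    rw [intervalIntegral.integral_add hpx intervalIntegrable_const]
    simp only [intervalIntegral.integral_same, intervalIntegral.integral_const, sub_zero,
      Complex.real_smul, Complex.ofReal_mul, Complex.ofReal_zero]
    ring
  refine (h_exponent.cexp_mul_of_linear_ode hu h).congr_deriv (.of_forall fun x ↦ ?_)
  rw [← mul_assoc, ← mul_assoc, ← gaugeFactor_mul_eq, gaugeFactor]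

/-- A solution of the boundary value problem `u' + (p + it)u + bv = 0`, `v' + (q - it)v + cu = 0`,
`u(0) = r₀ v(0)`, `v(1) = r₁ u(1)`. The signs make the problem symmetric under exchanging `u` with
`v` and `t` with `-t`. -/
structure IsModeSolution (p q b c : ℝ → ℂ) (r₀ r₁ : ℂ) (t : ℝ) (u v u' v' : ℝ → ℂ) : Prop where
  left_ac : IsACOn01 u u'
  right_ac : IsACOn01 v v'
  left_eq : ∀ᵐ x ∂volume.restrict (Ioo 0 1), u' x + (p x + t * Complex.I) * u x + b x * v x = 0
  right_eq : ∀ᵐ x ∂volume.restrict (Ioo 0 1), v' x + (q x - t * Complex.I) * v x + c x * u x = 0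
  at_zero : u 0 = r₀ * v 0
  at_one : v 1 = r₁ * u 1

namespace IsModeSolution

variable {t : ℝ}

theorem isOffDiagonalSolution (h : IsModeSolution p q b c r₀ r₁ t u v u' v')
    (hp : IntervalIntegrable p volume 0 1) (hq : IntervalIntegrable q volume 0 1) :
    IsOffDiagonalSolution
      (fun x ↦ Complex.exp ((2 * t * x : ℝ) * Complex.I) • gaugedCoupling p q b x)
      (fun x ↦ Complex.exp ((-2 * t * x : ℝ) * Complex.I) • gaugedCoupling q p c x)
      (fun x ↦ gaugeFactor p t x * u x) (fun x ↦ gaugeFactor q (-t) x * v x) where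
  left := h.left_ac.gaugeFactor_mul hp q t h.left_eq
  right := by
    have h_right : ∀ᵐ x ∂volume.restrict (Ioo 0 1),
        v' x + (q x + (-t : ℝ) * Complex.I) * v x + c x * u x = 0 := by
      simpa only [Complex.ofReal_neg, neg_mul, ← sub_eq_add_neg] using h.right_eq
    simpa only [neg_neg, mul_neg, neg_mul] using h.right_ac.gaugeFactor_mul hq p (-t) h_right

theorem norm_gaugeFactor_mul_at_zero (h : IsModeSolution p q b c r₀ r₁ t u v u' v') :
    ‖gaugeFactor p t 0 * u 0‖ = ‖r₀‖ * ‖gaugeFactor q (-t) 0 * v 0‖ := by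
  rw [gaugeFactor_zero, gaugeFactor_zero, one_mul, one_mul, h.at_zero, norm_mul]

theorem norm_gaugeFactor_mul_at_one (h : IsModeSolution p q b c r₀ r₁ t u v u' v') :
    ‖gaugeFactor q (-t) 1 * v 1‖ =
      ‖r₁‖ * Real.exp ((∫ y in (0 : ℝ)..1, q y) - ∫ y in (0 : ℝ)..1, p y).re *
        ‖gaugeFactor p t 1 * u 1‖ := by
  rw [h.at_one, norm_mul, norm_mul, norm_mul, norm_gaugeFactor, norm_gaugeFactor,
    Complex.sub_re, Real.exp_sub]
  field_simp

end IsModeSolution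

theorem eventually_cocompact_forall_isModeSolution_eq_zero
    (hp : IntervalIntegrable p volume 0 1) (hq : IntervalIntegrable q volume 0 1)
    (hb : IntervalIntegrable b volume 0 1) (hc : IntervalIntegrable c volume 0 1)
    (hne : ‖r₀ * r₁‖ ≠
      Real.exp ((∫ x in (0 : ℝ)..1, p x) - ∫ x in (0 : ℝ)..1, q x).re) :
    ∀ᶠ t in cocompact ℝ, ∀ u v u' v', IsModeSolution p q b c r₀ r₁ t u v u' v' →
      ∀ x ∈ Icc (0 : ℝ) 1, u x = 0 ∧ v x = 0 := by
  set ρ := ‖r₁‖ * Real.exp ((∫ y in (0 : ℝ)..1, q y) - ∫ y in (0 : ℝ)..1, p y).re with hρ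
  have h_gap : 0 < |1 - ρ * ‖r₀‖| := by
    rw [abs_pos, sub_ne_zero]
    contrapose! hne
    rw [hρ, ← neg_sub, Complex.neg_re, Real.exp_neg, mul_right_comm, eq_comm,
      mul_inv_eq_one₀ (Real.exp_pos _).ne'] at hne
    rw [norm_mul, mul_comm, hne]
  have hB := intervalIntegrable_gaugedCoupling hp hq hb
  have hC := intervalIntegrable_gaugedCoupling hq hp hc
  set K := max (∫ y in (0 : ℝ)..1, ‖gaugedCoupling p q b y‖)
    (∫ y in (0 : ℝ)..1, ‖gaugedCoupling q p c y‖)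
  have h_uIcc : uIcc (0 : ℝ) 1 = Icc 0 1 := uIcc_of_le zero_le_one
  obtain ⟨ε, hε, hsmall⟩ := exists_pos_mul_lt h_gap
    ((1 + K) * ((1 + ‖r₀‖) * (1 + ρ) + |1 - ρ * ‖r₀‖|))
  filter_upwards [eventually_norm_integral_cexp_smul_le hB two_ne_zero hε,
    eventually_norm_integral_cexp_smul_le hC (neg_ne_zero.2 two_ne_zero) hε]
    with t hBt hCt u v u' v' h x hx
  have h_gauged := (h.isOffDiagonalSolution hp hq).eq_zero_of_norm_integral_le
    (intervalIntegrable_cexp_smul hB _) (intervalIntegrable_cexp_smul hC _)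
    (h_uIcc ▸ hBt) (h_uIcc ▸ hCt) (K := K)
    (by simp only [norm_cexp_smul]; exact le_max_left _ _)
    (by simp only [norm_cexp_smul]; exact le_max_right _ _) (norm_nonneg _) (by positivity)
    h.norm_gaugeFactor_mul_at_zero h.norm_gaugeFactor_mul_at_one (by linarith) hx
  simpa only [mul_eq_zero, gaugeFactor_ne_zero, false_or] using h_gauged

end Gauge

section Coefficients

variable {f : ℝ → ℝ} {s t : ℝ}

theorem intervalIntegrable_ofReal (hf : IntervalIntegrable f volume s t) :
    IntervalIntegrable (fun x ↦ (f x : ℂ)) volume s t :=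
  ⟨hf.1.ofReal, hf.2.ofReal⟩

theorem intervalIntegrable_ofReal_of_abs_le {C : ℝ} (hf : Measurable f) (hC : ∀ x, |f x| ≤ C) :
    IntervalIntegrable (fun x ↦ (f x : ℂ)) volume s t :=
  intervalIntegrable_ofReal <|
    (intervalIntegrable_const (c := C)).mono_fun' hf.aestronglyMeasurable (.of_forall hC)

theorem intervalIntegrable_ofReal_of_boundedVariationOn (hst : s ≤ t)
    (hf : BoundedVariationOn f (Icc s t)) :
    IntervalIntegrable (fun x ↦ (f x : ℂ)) volume s t := by
  rw [← uIcc_of_le hst] at hf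
  obtain ⟨g, h, hg, hh, rfl⟩ := hf.locallyBoundedVariationOn.exists_monotoneOn_sub_monotoneOn
  exact intervalIntegrable_ofReal (hg.intervalIntegrable.sub hh.intervalIntegrable)

end Coefficients

theorem stmt10_general {ω : ℝ} {r₀ r₁ : ℂ} {a b c d : ℝ → ℂ} (hω : ω ≠ 0)
    (ha : IntervalIntegrable a volume 0 1) (hd : IntervalIntegrable d volume 0 1)
    (hb : IntervalIntegrable b volume 0 1) (hc : IntervalIntegrable c volume 0 1)
    (hne : ‖r₀ * r₁‖ ≠
      Real.exp ((∫ x in (0 : ℝ)..1, a x) + ∫ x in (0 : ℝ)..1, d x).re) :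
    {k : ℤ | ∃ u v u' v' : ℝ → ℂ,
      IsACOn01 u u' ∧ IsACOn01 v v' ∧
      (∀ᵐ x ∂(volume.restrict (Ioo (0 : ℝ) 1)),
        u' x + (a x + k * ω * Complex.I) * u x + b x * v x = 0) ∧
      (∀ᵐ x ∂(volume.restrict (Ioo (0 : ℝ) 1)),
        v' x - (d x + k * ω * Complex.I) * v x + c x * u x = 0) ∧
      u 0 = r₀ * v 0 ∧ v 1 = r₁ * u 1 ∧
      ∃ x ∈ Icc (0 : ℝ) 1, u x ≠ 0 ∨ v x ≠ 0}.Finite := by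
  have h_zero := eventually_cocompact_forall_isModeSolution_eq_zero ha hd.neg hb hc
    (r₀ := r₀) (r₁ := r₁) (by simpa [intervalIntegral.integral_neg] using hne)
  have h_finite := eventually_cofinite.1
    (((tendsto_const_mul_cocompact hω).comp Int.tendsto_coe_cofinite).eventually h_zero)
  refine h_finite.subset ?_
  rintro k ⟨u, v, u', v', hu, hv, hu_eq, hv_eq, h0, h1, x, hx, h_ne⟩ hk
  have h_mode : IsModeSolution a (-d) b c r₀ r₁ (ω * k) u v u' v' := by
    refine ⟨hu, hv, ?_, ?_, h0, h1⟩
    · filter_upwards [hu_eq] with y hy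
      push_cast
      linear_combination hy
    · filter_upwards [hv_eq] with y hy
      simp only [Pi.neg_apply]
      push_cast
      linear_combination hy
  obtain ⟨hux, hvx⟩ := hk u v u' v' h_mode x hx
  exact h_ne.elim (· hux) (· hvx)

/-- under `a, d ∈ L^∞`, `b, c` of bounded variation and
`|r₀r₁| ≠ e^{α(1)+δ(1)}`, the set of `k ∈ ℤ` for which the homogeneous boundary value
problem `u' + (a + ikω)u + bv = 0`, `v' − (d + ikω)v + cu = 0` a.e. on `(0,1)` with
`u(0) = r₀v(0)`, `v(1) = r₁u(1)` has a nontrivial solution is finite. -/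
theorem stmt10 (ω r₀ r₁ : ℝ) (hω : 0 < ω) (a d : ℝ → ℝ)
    (ha : Measurable a) (hd : Measurable d)
    (Ca Cd : ℝ) (haB : ∀ x, |a x| ≤ Ca) (hdB : ∀ x, |d x| ≤ Cd)
    (b c : ℝ → ℝ)
    (hb : BoundedVariationOn b (Icc (0:ℝ) 1)) (hc : BoundedVariationOn c (Icc (0:ℝ) 1))
    (α δ : ℝ → ℝ)
    (hα : ∀ x, α x = ∫ y in (0:ℝ)..x, a y)
    (hδ : ∀ x, δ x = ∫ y in (0:ℝ)..x, d y)
    (hne : |r₀ * r₁| ≠ Real.exp (α 1 + δ 1)) :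
    {k : ℤ | ∃ u v u' v' : ℝ → ℂ,
      IsACOn01 u u' ∧ IsACOn01 v v' ∧
      (∀ᵐ x ∂(volume.restrict (Ioo (0 : ℝ) 1)),
        u' x + ((a x : ℂ) + (k : ℂ) * (ω : ℂ) * Complex.I) * u x + ((b x : ℝ) : ℂ) * v x = 0) ∧
      (∀ᵐ x ∂(volume.restrict (Ioo (0 : ℝ) 1)),
        v' x - ((d x : ℂ) + (k : ℂ) * (ω : ℂ) * Complex.I) * v x + ((c x : ℝ) : ℂ) * u x = 0) ∧
      u 0 = (r₀ : ℂ) * v 0 ∧ v 1 = (r₁ : ℂ) * u 1 ∧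
      ∃ x ∈ Icc (0:ℝ) 1, u x ≠ 0 ∨ v x ≠ 0}.Finite :=
  stmt10_general hω.ne' (intervalIntegrable_ofReal_of_abs_le ha haB)
    (intervalIntegrable_ofReal_of_abs_le hd hdB)
    (intervalIntegrable_ofReal_of_boundedVariationOn zero_le_one hb)
    (intervalIntegrable_ofReal_of_boundedVariationOn zero_le_one hc)
    (by simpa [hα, hδ, intervalIntegral.integral_ofReal, abs_mul] using hne)
end
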